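/- arXiv:1712.03565 — 2 statements merged into one kernel-verified Lean document; each statement's English description precedes it below -/
import Mathlib

section
/- Consider a single leaf connected to the sink through levels 0,…,h with y ≥ 0, δ_i ∈ (0,1] for all i, ε_R, ε_T, ε_C ≥ 0, w_ca ≥ 0, T ≥ 0 and R ≥ 1. For c ∈ {0,…,h}, let e^{(c)} denote the caching decision that caches at level c (b_c = 1 and b_i = 0 for i ≠ c), so that E^R(e^{(c)}) = y·(R−1)·Σ_{ℓ=0}^{c−1} f(δ_ℓ)·Π_{m=ℓ+1}^{h} δ_m + y·(Π_{m=c}^{h} δ_m)·(w_ca·T + (R−1)·ε_T). Then c ↦ E^R(e^{(c)}) is monotonically nondecreasing in c; in particular, for every 1 ≤ c ≤ h, E^R(e^{(c−1)}) ≤ E^R(e^{(c)}), i.e., for fixed compression rates, moving the cached copy one level closer to the sink never increases the retrieval energy. -/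
open Finset

/-- Per-bit cost function `f(δ) = ε_R + ε_T·δ + ε_C·(1/δ − 1)`. -/
noncomputable def fcost (εR εT εC δ : ℝ) : ℝ := εR + εT * δ + εC * (1 / δ - 1)

/-- One-time cost `E^C = Σ_{i=0}^{h} y·f(δ_i)·Π_{m=i+1}^{h} δ_m`. -/
noncomputable def ECost (εR εT εC y : ℝ) (h : ℕ) (δ : ℕ → ℝ) : ℝ :=
  ∑ i ∈ Finset.range (h + 1),
    y * fcost εR εT εC (δ i) * ∏ m ∈ Finset.Icc (i + 1) h, δ m

/-- Retrieval cost
`E^R = Σ_{i=0}^{h} y·[(R−1)·f(δ_i)·(Π_{m=i+1}^{h} δ_m)·(1 − Σ_{j=0}^{i} b_j)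
      + (Π_{m=i}^{h} δ_m)·b_i·(w_ca·T + (R−1)·ε_T)]`. -/
noncomputable def ERet (εR εT εC wca T y R : ℝ) (h : ℕ) (δ b : ℕ → ℝ) : ℝ :=
  ∑ i ∈ Finset.range (h + 1),
    y * ((R - 1) * fcost εR εT εC (δ i) * (∏ m ∈ Finset.Icc (i + 1) h, δ m) *
        (1 - ∑ j ∈ Finset.range (i + 1), b j)
      + (∏ m ∈ Finset.Icc i h, δ m) * b i * (wca * T + (R - 1) * εT))

/-- Caching one level closer to the sink never increases the retrieval energy. -/
theorem cache_closer_to_sink_decreases_retrieval_energy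
    (εR εT εC wca T y R : ℝ) (h : ℕ) (δ : ℕ → ℝ)
    (hεR : 0 ≤ εR) (hεT : 0 ≤ εT) (hεC : 0 ≤ εC) (hwca : 0 ≤ wca) (hT : 0 ≤ T)
    (hy : 0 ≤ y) (hδ : ∀ i ≤ h, 0 < δ i ∧ δ i ≤ 1) (hR : 1 ≤ R) :
    (∀ c ≤ h, ERet εR εT εC wca T y R h δ (fun i => if i = c then 1 else 0)
        = y * (R - 1) * ∑ ℓ ∈ Finset.range c,
              fcost εR εT εC (δ ℓ) * ∏ m ∈ Finset.Icc (ℓ + 1) h, δ m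
          + y * (∏ m ∈ Finset.Icc c h, δ m) * (wca * T + (R - 1) * εT)) ∧
    (∀ c, 1 ≤ c → c ≤ h →
      ERet εR εT εC wca T y R h δ (fun i => if i = c - 1 then 1 else 0)
        ≤ ERet εR εT εC wca T y R h δ (fun i => if i = c then 1 else 0)) := by
  have key : ∀ c ≤ h, ERet εR εT εC wca T y R h δ (fun i => if i = c then 1 else 0)
        = y * (R - 1) * ∑ ℓ ∈ Finset.range c,
              fcost εR εT εC (δ ℓ) * ∏ m ∈ Finset.Icc (ℓ + 1) h, δ m
          + y * (∏ m ∈ Finset.Icc c h, δ m) * (wca * T + (R - 1) * εT) := by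
    intro c hc
    unfold ERet
    have hterm : ∀ i ∈ Finset.range (h + 1),
        y * ((R - 1) * fcost εR εT εC (δ i) * (∏ m ∈ Finset.Icc (i + 1) h, δ m) *
          (1 - ∑ j ∈ Finset.range (i + 1), (if j = c then (1 : ℝ) else 0))
          + (∏ m ∈ Finset.Icc i h, δ m) * (if i = c then (1 : ℝ) else 0)
            * (wca * T + (R - 1) * εT))
        = (if i < c then y * (R - 1) *
            (fcost εR εT εC (δ i) * ∏ m ∈ Finset.Icc (i + 1) h, δ m) else 0)
          + (if i = c then
              y * (∏ m ∈ Finset.Icc i h, δ m) * (wca * T + (R - 1) * εT) else 0) := by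
      intro i _
      rw [Finset.sum_ite_eq']
      simp only [Finset.mem_range]
      rcases lt_trichotomy i c with hlt | heq | hgt
      · rw [if_neg (by omega), if_neg (by omega), if_pos hlt, if_neg (by omega)]
        ring
      · rw [if_pos (by omega), if_pos heq, if_neg (by omega), if_pos heq]
        ring
      · rw [if_pos (by omega), if_neg (by omega), if_neg (by omega), if_neg (by omega)]
        ring
    rw [Finset.sum_congr rfl hterm, Finset.sum_add_distrib, Finset.sum_ite_eq',
      if_pos (Finset.mem_range.2 (by omega)), ← Finset.sum_filter, Finset.mul_sum]
    have hfil : (Finset.range (h + 1)).filter (fun i => i < c) = Finset.range c := by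
      ext i
      simp only [Finset.mem_filter, Finset.mem_range]
      omega
    rw [hfil]
  refine ⟨key, ?_⟩
  intro c h1 hc
  obtain ⟨k, rfl⟩ : ∃ k, c = k + 1 := ⟨c - 1, by omega⟩
  rw [Nat.add_sub_cancel, key k (by omega), key (k + 1) hc, Finset.sum_range_succ]
  have hprod : ∏ m ∈ Finset.Icc k h, δ m = δ k * ∏ m ∈ Finset.Icc (k + 1) h, δ m := by
    rw [← Finset.insert_Icc_add_one_left_eq_Icc (show k ≤ h by omega),
      Finset.prod_insert (by simp)]
  have hP : 0 ≤ ∏ m ∈ Finset.Icc (k + 1) h, δ m :=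
    Finset.prod_nonneg fun m hm => (hδ m (Finset.mem_Icc.1 hm).2).1.le
  obtain ⟨hd0, hd1⟩ := hδ k (by omega)
  have hf : 0 ≤ fcost εR εT εC (δ k) := by
    have : 1 ≤ 1 / δ k := by rw [le_div_iff₀ hd0]; linarith
    have h2 := mul_nonneg hεC (sub_nonneg.2 this)
    have h3 := mul_nonneg hεT hd0.le
    unfold fcost
    linarith
  have hR' : 0 ≤ R - 1 := by linarith
  have hA : 0 ≤ wca * T + (R - 1) * εT := by positivity
  rw [hprod]
  have hd : 0 ≤ 1 - δ k := by linarith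
  have hyP := mul_nonneg hy hP
  have t1 := mul_nonneg hyP (mul_nonneg hR' hf)
  have t2 := mul_nonneg hyP (mul_nonneg hd hA)
  linarith
end

section
/- Reduction correctness (core of the NP-hardness Theorem): let K be a finite set of leaves, each at level 1 below a common sink, with y_k ≥ 0, δ_{k,0} = δ_{k,1} = 1, R_k ≥ 1, caching decision b_k ∈ {0,1} at the sink, zero caching cost w_ca = 0, and sink cache capacity W ≥ 0. Set c_k = y_k·(R_k−1)·(2·f(1) − ε_T) with f(1) = ε_R + ε_T. Then E^total(b) = C − Σ_{k∈K} b_k·c_k for a constant C independent of b, and consequently a vector b* ∈ {0,1}^K with Σ_{k∈K} y_k·b*_k ≤ W minimizes E^total over all b ∈ {0,1}^K satisfying Σ_{k∈K} y_k·b_k ≤ W if and only if b* maximizes the knapsack objective Σ_{k∈K} c_k·b_k over the same feasible set. -/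
open Finset

/-- Reduction correctness (core of the NP-hardness theorem): the total energy is an
affine function `C − Σ_k b_k·c_k` of the caching decisions, hence minimizing energy
over capacity-feasible 0/1 decisions is equivalent to maximizing the knapsack
objective `Σ_k c_k·b_k`. -/
theorem knapsack_reduction_correctness {ι : Type*} (K : Finset ι)
    (εR εT εC T W : ℝ) (hεR : 0 ≤ εR) (hεT : 0 ≤ εT) (hεC : 0 ≤ εC)
    (hT : 0 ≤ T) (hW : 0 ≤ W)
    (y R : ι → ℝ) (hy : ∀ k ∈ K, 0 ≤ y k) (hR : ∀ k ∈ K, 1 ≤ R k) :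
    let c : ι → ℝ := fun k => y k * (R k - 1) * (2 * (εR + εT) - εT)
    let Etotal : (ι → ℝ) → ℝ := fun b => ∑ k ∈ K,
      (ECost εR εT εC (y k) 1 (fun _ => 1)
        + ERet εR εT εC 0 T (y k) (R k) 1 (fun _ => 1) (fun i => if i = 0 then b k else 0))
    let feasible : (ι → ℝ) → Prop := fun b =>
      (∀ k ∈ K, b k = 0 ∨ b k = 1) ∧ ∑ k ∈ K, y k * b k ≤ W
    (∃ C : ℝ, ∀ b : ι → ℝ, (∀ k ∈ K, b k = 0 ∨ b k = 1) →
        Etotal b = C - ∑ k ∈ K, b k * c k) ∧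
    (∀ bstar : ι → ℝ, feasible bstar →
      ((∀ b : ι → ℝ, feasible b → Etotal bstar ≤ Etotal b) ↔
        (∀ b : ι → ℝ, feasible b → ∑ k ∈ K, c k * b k ≤ ∑ k ∈ K, c k * bstar k))) := by
  intro c Etotal feasible
  have key : ∀ b : ι → ℝ, Etotal b =
      (∑ k ∈ K, (2 * y k * (εR + εT) + 2 * y k * (R k - 1) * (εR + εT)))
        - ∑ k ∈ K, c k * b k := by
    intro b
    rw [← Finset.sum_sub_distrib]
    refine Finset.sum_congr rfl fun k _ => ?_
    simp [ECost, ERet, fcost, c, Finset.sum_range_succ]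
    ring
  refine ⟨⟨∑ k ∈ K, (2 * y k * (εR + εT) + 2 * y k * (R k - 1) * (εR + εT)), fun b _ => ?_⟩, fun bstar _ => ?_⟩
  · rw [key b]
    congr 1
    exact Finset.sum_congr rfl fun k _ => mul_comm _ _
  · refine forall_congr' fun b => imp_congr_right fun _ => ?_
    rw [key b, key bstar]
    exact sub_le_sub_iff_left _
end
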